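/- Fix an integer m and let 𝒩 be the number of pairs (x,y) ∈ ℤ² with gcd(x,y) = 1 and xy(x+y) ≠ 0 such that F_m(x,y) is positive and divides m²+3m+9. Then the number of integers n with n ≥ −1, n ≠ m, n ≠ −m−3 and L_n = L_m equals 𝒩/3; equivalently, 𝒩 = 3 · #{n ∈ ℤ : n ≥ −1, n ∉ {m, −m−3}, L_n = L_m}. -/

import Mathlib

open Polynomial

/-- The cubic form `F_m(X,Y) = X³ − mX²Y − (m+3)XY² − Y³`. -/
def F (m x y : ℤ) : ℤ := x ^ 3 - m * x ^ 2 * y - (m + 3) * x * y ^ 2 - y ^ 3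

/-- The simplest cubic polynomial `f_m(X) = X³ − mX² − (m+3)X − 1` over `ℚ`. -/
noncomputable def f (m : ℤ) : ℚ[X] :=
  X ^ 3 - C (m : ℚ) * X ^ 2 - C ((m : ℚ) + 3) * X - 1

/-- The simplest cubic field `L_m`. -/
noncomputable def L (m : ℤ) : IntermediateField ℚ (AlgebraicClosure ℚ) :=
  IntermediateField.adjoin ℚ ((f m).rootSet (AlgebraicClosure ℚ))

/-!
The roots of `f_m` are permuted cyclically by `ρ(x) = -1 / (x + 1)`. Let `θ` be a root of `f_m` and
`η ≠ θ` a root of `f_n` lying in `L_m`, and let `σ` act by `ρ` on both. Then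
`t = (ηθ + θ + 1) / (η - θ)` is fixed by `σ`, hence rational, and `η = M_t(θ)` for
`M_t(x) = ((1 + t) x + 1) / (t - x)`, a Möbius map commuting with `ρ`. Conversely, for rational `t`
the identity
`f_m(t) f_n(M_t θ) = M_t θ (M_t θ + 1) ((m² + 3m + 9) t (t + 1) - (n - m) f_m(t))`
shows that `M_t θ` is a root of `f_n` exactly when, with `t = x / y` in lowest terms,
`(n - m) F_m(x, y) = (m² + 3m + 9) x y (x + y)`. Since `F_m(x, y)` is coprime to `x y (x + y)`, an
integer `n` of this kind exists exactly when `F_m(x, y)` divides `m² + 3m + 9`. The pairs giving the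
same `n` form an orbit of `(x, y) ↦ (y, -x - y)`, which has three elements. Finally, inverting the
roots shows that `f_n` and `f_{-n-3}` have the same splitting field but are rotated by `σ` in
opposite directions, so each `n` with `L_n = L_m` satisfies exactly one of: `σ` rotates the roots of
`f_n` by `ρ`, or it rotates those of `f_{-n-3}` by `ρ`.
-/

theorem ncard_eq_mul_ncard_image {α β : Type*} {g : α → β} {s : Set α} {k : ℕ} (hk : k ≠ 0)
    (hg : ∀ b ∈ g '' s, (s ∩ g ⁻¹' {b}).ncard = k) : s.ncard = k * (g '' s).ncard := by
  rcases (g '' s).finite_or_infinite with hfin | hinf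
  · have fibers_finite : ∀ b ∈ g '' s, (s ∩ g ⁻¹' {b}).Finite := fun _ hb =>
      Set.finite_of_ncard_ne_zero ((hg _ hb).trans_ne hk)
    have fibers_disjoint : (g '' s).PairwiseDisjoint fun b => s ∩ g ⁻¹' {b} :=
      fun _ _ _ _ hbc => ((Set.disjoint_singleton.2 hbc).preimage g).mono
        Set.inter_subset_right Set.inter_subset_right
    have union_fibers : ⋃ b ∈ g '' s, s ∩ g ⁻¹' {b} = s := by
      rw [← Set.inter_iUnion₂, Set.biUnion_preimage_singleton,
        Set.inter_eq_left.2 (Set.subset_preimage_image g s)]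
    calc s.ncard = ∑ᶠ b ∈ g '' s, (s ∩ g ⁻¹' {b}).ncard := by
          rw [← hfin.ncard_biUnion fibers_finite fibers_disjoint, union_fibers]
      _ = ∑ _ ∈ hfin.toFinset, k := by
          rw [finsum_mem_congr rfl hg, finsum_mem_eq_finite_toFinset_sum _ hfin]
      _ = k * (g '' s).ncard := by
          rw [Finset.sum_const, smul_eq_mul, mul_comm, Set.ncard_eq_toFinset_card _ hfin]
  · rw [hinf.ncard, hinf.of_image.ncard, mul_zero]

theorem mem_bot_of_finrank_prime {k E : Type*} [Field k] [Field E] [Algebra k E]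
    {K : IntermediateField k E} (hK : (Module.finrank k K).Prime) {σ : E ≃ₐ[k] E} {x y : E}
    (hx : x ∈ K) (hσx : σ x ≠ x) (hy : y ∈ K) (hσy : σ y = y) :
    y ∈ (⊥ : IntermediateField k E) := by
  set M := K ⊓ IntermediateField.fixedField (Subgroup.zpowers σ)
  have hMK : M ≤ K := inf_le_left
  have hyM : y ∈ M := by
    refine ⟨hy, (IntermediateField.mem_fixedField_iff _ y).2 ?_⟩
    exact Subgroup.zpowers_le (H := MulAction.stabilizer (E ≃ₐ[k] E) y).2 hσy
  have hxM : x ∉ M := fun hxM =>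
    hσx ((IntermediateField.mem_fixedField_iff _ x).1 hxM.2 σ (Subgroup.mem_zpowers σ))
  rcases (Nat.dvd_prime hK).1 (IntermediateField.finrank_dvd_of_le_right hMK) with hM | hM
  · exact IntermediateField.finrank_eq_one_iff.1 hM ▸ hyM
  · have : FiniteDimensional k K := Module.finite_of_finrank_pos hK.pos
    exact absurd (IntermediateField.eq_of_le_of_finrank_eq hMK hM ▸ hx) hxM

section Form

variable {R S : Type*} [CommRing R] [CommRing S]

/-- The form `F_a(x, y)` over an arbitrary commutative ring, with a parameter `a` in that ring. -/
def shanksForm (a x y : R) : R := x ^ 3 - a * x ^ 2 * y - (a + 3) * x * y ^ 2 - y ^ 3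

theorem F_eq_shanksForm (m x y : ℤ) : F m x y = shanksForm m x y := rfl

theorem map_shanksForm (φ : R →+* S) (a x y : R) :
    φ (shanksForm a x y) = shanksForm (φ a) (φ x) (φ y) := by
  simp only [shanksForm, map_sub, map_mul, map_pow, map_add, map_ofNat]

theorem shanksForm_mul_mul (a c x y : R) :
    shanksForm a (c * x) (c * y) = c ^ 3 * shanksForm a x y := by
  unfold shanksForm; ring

theorem shanksForm_rotate (a x y : R) : shanksForm a y (-x - y) = shanksForm a x y := by
  unfold shanksForm; ring

theorem shanksForm_sub (a b x y : R) :
    shanksForm a x y - shanksForm b x y = (b - a) * (x * y * (x + y)) := by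
  unfold shanksForm; ring

theorem cross_shanksForm (a x y u v : R) :
    x * y * (x + y) * shanksForm a u v - u * v * (u + v) * shanksForm a x y =
      (x * v - y * u) * ((x * (-u - v) - y * v) * (x * u - y * (-u - v))) := by
  unfold shanksForm; ring

theorem shanksForm_mul_shanksForm_matrix (a t x : R) :
    shanksForm a t 1 * shanksForm a ((1 + t) * x + 1) (t - x) =
      (a ^ 2 + 3 * a + 9) * (t * (t + 1)) *
          (((1 + t) * x + 1) * (t - x) * ((1 + t) * x + 1 + (t - x))) +
        (t ^ 2 + t + 1) ^ 3 * shanksForm a x 1 := by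
  unfold shanksForm; ring

theorem isCoprime_shanksForm_left {x y : R} (a : R) (h : IsCoprime x y) :
    IsCoprime (shanksForm a x y) x := by
  have key : shanksForm a x y = -y ^ 3 + x * (x ^ 2 - a * x * y - (a + 3) * y ^ 2) := by
    unfold shanksForm; ring
  rw [key]
  exact h.symm.pow_left.neg_left.add_mul_left_left _

theorem isCoprime_rotate {x y : R} (h : IsCoprime x y) : IsCoprime y (-x - y) := by
  rw [show -x - y = -x + y * -1 by ring]
  exact h.symm.neg_right.add_mul_left_right _

theorem isCoprime_shanksForm {x y : R} (a : R) (h : IsCoprime x y) :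
    IsCoprime (shanksForm a x y) (x * y * (x + y)) := by
  have hy := isCoprime_shanksForm_left a (isCoprime_rotate h)
  have hxy := isCoprime_shanksForm_left a (isCoprime_rotate (isCoprime_rotate h))
  rw [shanksForm_rotate] at hy
  rw [shanksForm_rotate, shanksForm_rotate, ← neg_add', IsCoprime.neg_right_iff] at hxy
  exact ((isCoprime_shanksForm_left a h).mul_right hy).mul_right hxy

theorem exists_units_mul_of_isCoprime {x y u v : R} (hxy : IsCoprime x y) (huv : IsCoprime u v)
    (h : x * v = y * u) : ∃ c : Rˣ, u = c * x ∧ v = c * y := by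
  obtain ⟨a, b, hab⟩ := hxy
  obtain ⟨c, d, hcd⟩ := huv
  have hu : u = (a * u + b * v) * x := by linear_combination (-u) * hab - b * h
  have hv : v = (a * u + b * v) * y := by linear_combination (-v) * hab + a * h
  have unit : (a * u + b * v) * (c * x + d * y) = 1 := by
    linear_combination hcd - c * hu - d * hv
  exact ⟨Units.mkOfMulEqOne _ _ unit, hu, hv⟩

end Form

section Moebius

variable {K E : Type*} [Field K] [Field E] {a b t x y : K}

/-- The Möbius transformation `x ↦ -1 / (x + 1)` of order three, which permutes the roots of every
`f_a` (with the junk value `0` at the pole `-1`, which is never a root). -/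
def rot (x : K) : K := -1 / (x + 1)

/-- The Möbius transformation with matrix `[[1 + t, 1], [-1, t]]` (with the junk value `0` at the
pole `t`). Up to scaling, these and the identity are the matrices commuting with that of `rot`. -/
def twist (t x : K) : K := ((1 + t) * x + 1) / (t - x)

/-- The parameter `t` for which `twist t x = y`; it is unchanged when `rot` is applied to both `x`
and `y`. -/
def twistParam (x y : K) : K := (y * x + x + 1) / (y - x)

/-- `x` is a root of the simplest cubic (Shanks) polynomial `f_a` with parameter `a`. -/
def IsShanksRoot (a x : K) : Prop := shanksForm a x 1 = 0

theorem rot_rot (h1 : x + 1 ≠ 0) : rot (rot x) = -(x + 1) / x := by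
  have : -1 / (x + 1) + 1 = x / (x + 1) := by field_simp; ring
  rw [rot, rot, this, div_div_eq_mul_div]
  ring

theorem rot_inv (h0 : x ≠ 0) (h1 : x + 1 ≠ 0) : rot x⁻¹ = (rot (rot x))⁻¹ := by
  have h : x⁻¹ + 1 = (x + 1) / x := by field_simp; ring
  rw [rot_rot h1, rot, h, inv_div, div_div_eq_mul_div, div_neg, neg_one_mul, neg_div]

theorem twist_rot (h1 : x + 1 ≠ 0) (htx : t ≠ x) : twist t (rot x) = rot (twist t x) := by
  have htx' : t - x ≠ 0 := sub_ne_zero.2 htx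
  have numerator : (1 + t) * (-1 / (x + 1)) + 1 = -(t - x) / (x + 1) := by field_simp; ring
  have denominator : t - -1 / (x + 1) = (t * (x + 1) + 1) / (x + 1) := by field_simp; ring
  have twist_add_one : ((1 + t) * x + 1) / (t - x) + 1 = (t * (x + 1) + 1) / (t - x) := by
    field_simp; ring
  rw [rot, rot, twist, twist, numerator, denominator, twist_add_one, div_div_div_cancel_right₀ h1,
    div_div_eq_mul_div, neg_one_mul]

theorem twist_twist (htx : t ≠ x) (ht : t ^ 2 + t + 1 ≠ 0) :
    twist (-1 - t) (twist t x) = x := by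
  have htx' : t - x ≠ 0 := sub_ne_zero.2 htx
  have numerator : (1 + (-1 - t)) * (((1 + t) * x + 1) / (t - x)) + 1 =
      -(t ^ 2 + t + 1) * x / (t - x) := by field_simp; ring
  have denominator : -1 - t - ((1 + t) * x + 1) / (t - x) = -(t ^ 2 + t + 1) / (t - x) := by
    field_simp; ring
  rw [twist, twist, numerator, denominator, div_div_div_cancel_right₀ htx',
    mul_div_cancel_left₀ _ (neg_ne_zero.2 ht)]

theorem twist_twistParam (hx : x ^ 2 + x + 1 ≠ 0) (hxy : x ≠ y) :
    twist (twistParam x y) x = y := by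
  have hyx : y - x ≠ 0 := sub_ne_zero.2 hxy.symm
  have numerator : (1 + (y * x + x + 1) / (y - x)) * x + 1 = (x ^ 2 + x + 1) * y / (y - x) := by
    field_simp; ring
  have denominator : (y * x + x + 1) / (y - x) - x = (x ^ 2 + x + 1) / (y - x) := by
    field_simp; ring
  rw [twist, twistParam, numerator, denominator, div_div_div_cancel_right₀ hyx,
    mul_div_cancel_left₀ _ hx]

theorem twistParam_rot (hx : x + 1 ≠ 0) (hy : y + 1 ≠ 0) :
    twistParam (rot x) (rot y) = twistParam x y := by
  have numerator : -1 / (y + 1) * (-1 / (x + 1)) + -1 / (x + 1) + 1 =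
      (y * x + x + 1) / ((y + 1) * (x + 1)) := by field_simp; ring
  have denominator : -1 / (y + 1) - -1 / (x + 1) = (y - x) / ((y + 1) * (x + 1)) := by
    field_simp; ring
  rw [rot, rot, twistParam, twistParam, numerator, denominator,
    div_div_div_cancel_right₀ (mul_ne_zero hy hx)]

namespace IsShanksRoot

theorem ne_zero (h : IsShanksRoot a x) : x ≠ 0 := by
  rintro rfl
  simp [IsShanksRoot, shanksForm] at h

theorem add_one_ne_zero (h : IsShanksRoot a x) : x + 1 ≠ 0 := by
  intro hx
  obtain rfl : x = -1 := eq_neg_of_add_eq_zero_left hx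
  refine one_ne_zero (α := K) ?_
  rw [← h]; unfold shanksForm; ring

theorem map_iff (φ : K →+* E) : IsShanksRoot (φ a) (φ x) ↔ IsShanksRoot a x := by
  rw [IsShanksRoot, ← map_one φ, ← map_shanksForm, map_eq_zero, IsShanksRoot]

theorem param_unique (ha : IsShanksRoot a x) (hb : IsShanksRoot b x) : a = b := by
  have difference := shanksForm_sub a b x 1
  rw [ha, hb, sub_self, zero_eq_mul, mul_one] at difference
  exact (sub_eq_zero.1 (difference.resolve_right
    (mul_ne_zero ha.ne_zero (ha.add_one_ne_zero)))).symm

protected theorem rot (h : IsShanksRoot a x) : IsShanksRoot a (rot x) := by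
  have h1 := h.add_one_ne_zero
  unfold IsShanksRoot shanksForm _root_.rot at *
  field_simp
  linear_combination -h

theorem inv (h : IsShanksRoot a x) : IsShanksRoot (-a - 3) x⁻¹ := by
  have h0 := h.ne_zero
  unfold IsShanksRoot shanksForm at *
  field_simp
  linear_combination -h

theorem eq_or_eq_rot (hx : IsShanksRoot a x) (hy : IsShanksRoot a y) :
    y = x ∨ y = rot x ∨ y = rot (rot x) := by
  have h0 := hx.ne_zero
  have h1 := hx.add_one_ne_zero
  have factored : (y - x) * ((y * (-x - 1) - 1) * (y * x - (-x - 1))) = 0 := by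
    have := cross_shanksForm a y 1 x 1
    rw [hx, hy] at this
    linear_combination -this
  rcases mul_eq_zero.1 factored with h | h
  · exact .inl (sub_eq_zero.1 h)
  rcases mul_eq_zero.1 h with h | h
  · refine .inr (.inl ((eq_div_iff h1).2 ?_))
    linear_combination -h
  · rw [rot_rot h1]
    refine .inr (.inr ((eq_div_iff h0).2 ?_))
    linear_combination h

theorem sq_add_add_one_ne_zero (h : IsShanksRoot a x) (ha : a ^ 2 + 3 * a + 9 ≠ 0) :
    x ^ 2 + x + 1 ≠ 0 := by
  intro hx
  have parameter : a = 3 * x := by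
    unfold IsShanksRoot shanksForm at h
    linear_combination h - (x - 1 - a) * hx
  apply ha
  rw [parameter]
  linear_combination 9 * hx

theorem rot_ne_self (h : IsShanksRoot a x) (ha : a ^ 2 + 3 * a + 9 ≠ 0) : rot x ≠ x := by
  intro hrot
  apply h.sq_add_add_one_ne_zero ha
  have := (div_eq_iff h.add_one_ne_zero).1 hrot
  linear_combination -this

theorem shanksForm_mul_shanksForm_twist (h : IsShanksRoot a x) (htx : t ≠ x) (b : K) :
    shanksForm a t 1 * shanksForm b (twist t x) 1 =
      twist t x * (twist t x + 1) *
        ((a ^ 2 + 3 * a + 9) * (t * (t + 1)) - (b - a) * shanksForm a t 1) := by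
  have htx' : t - x ≠ 0 := sub_ne_zero.2 htx
  set y := twist t x
  have hyx : y * (t - x) = (1 + t) * x + 1 := div_mul_cancel₀ _ htx'
  have scale : shanksForm a ((1 + t) * x + 1) (t - x) = (t - x) ^ 3 * shanksForm a y 1 := by
    rw [← shanksForm_mul_mul, mul_one, mul_comm _ y, hyx]
  have product := shanksForm_mul_shanksForm_matrix a t x
  rw [h, mul_zero, add_zero, scale, ← hyx] at product
  apply mul_left_cancel₀ (pow_ne_zero 3 htx')
  linear_combination product - (t - x) ^ 3 * shanksForm a t 1 * shanksForm_sub a b y 1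

theorem twist_iff (h : IsShanksRoot a x) (ht : ¬ IsShanksRoot a t) :
    IsShanksRoot b (twist t x) ↔
      (b - a) * shanksForm a t 1 = (a ^ 2 + 3 * a + 9) * (t * (t + 1)) := by
  have htx : t ≠ x := fun htx => ht (htx ▸ h)
  have key := h.shanksForm_mul_shanksForm_twist htx b
  refine ⟨fun hroot => ?_, fun heq => ?_⟩
  · rw [hroot, mul_zero, eq_comm, mul_eq_zero_iff_left
      (mul_ne_zero hroot.ne_zero hroot.add_one_ne_zero)] at key
    exact (sub_eq_zero.1 key).symm
  · rw [heq, sub_self, mul_zero] at key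
    exact (mul_eq_zero.1 key).resolve_left ht

theorem twist_map_iff (φ : K →+* E) {x : E} (h : IsShanksRoot (φ a) x) (ht : ¬ IsShanksRoot a t) :
    IsShanksRoot (φ b) (twist (φ t) x) ↔
      (b - a) * shanksForm a t 1 = (a ^ 2 + 3 * a + 9) * (t * (t + 1)) := by
  rw [h.twist_iff (mt (map_iff φ).1 ht), ← φ.injective.eq_iff]
  simp only [map_mul, map_sub, map_add, map_pow, map_ofNat, map_one, map_shanksForm]

end IsShanksRoot

theorem map_rot (φ : K →+* E) (x : K) : φ (rot x) = rot (φ x) := by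
  simp only [rot, map_div₀, map_neg, map_add, map_one]

theorem map_twist (φ : K →+* E) (t x : K) : φ (twist t x) = twist (φ t) (φ x) := by
  simp only [twist, map_div₀, map_mul, map_sub, map_add, map_one]

theorem map_twistParam (φ : K →+* E) (x y : K) :
    φ (twistParam x y) = twistParam (φ x) (φ y) := by
  simp only [twistParam, map_div₀, map_mul, map_sub, map_add, map_one]

end Moebius

section Extension

open IntermediateField

variable {k E : Type*} [Field k] [Field E] [Algebra k E]

theorem rot_mem {K : IntermediateField k E} {x : E} (hx : x ∈ K) : rot x ∈ K :=
  div_mem (neg_mem (one_mem K)) (add_mem hx (one_mem K))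

theorem twist_mem {K : IntermediateField k E} {t x : E} (ht : t ∈ K) (hx : x ∈ K) :
    twist t x ∈ K :=
  div_mem (add_mem (mul_mem (add_mem (one_mem K) ht) hx) (one_mem K)) (sub_mem ht hx)

theorem twistParam_mem {K : IntermediateField k E} {x y : E} (hx : x ∈ K) (hy : y ∈ K) :
    twistParam x y ∈ K :=
  div_mem (add_mem (add_mem (mul_mem hy hx) hx) (one_mem K)) (sub_mem hy hx)

theorem adjoin_twist {t : k} {x : E} (htx : algebraMap k E t ≠ x) (ht : t ^ 2 + t + 1 ≠ 0) :
    k⟮twist (algebraMap k E t) x⟯ = k⟮x⟯ := by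
  apply le_antisymm <;> rw [adjoin_simple_le_iff]
  · exact twist_mem (IntermediateField.algebraMap_mem _ t) (mem_adjoin_simple_self k x)
  · have ht' : algebraMap k E t ^ 2 + algebraMap k E t + 1 ≠ 0 := by
      rw [← map_pow, ← map_add, ← map_one (algebraMap k E), ← map_add]
      exact (_root_.map_ne_zero _).2 ht
    have ht'' : -1 - algebraMap k E t ∈ k⟮twist (algebraMap k E t) x⟯ :=
      sub_mem (neg_mem (one_mem _)) (IntermediateField.algebraMap_mem _ t)
    have := twist_mem ht'' (mem_adjoin_simple_self k (twist (algebraMap k E t) x))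
    rwa [twist_twist htx ht'] at this

theorem adjoin_inv (x : E) : k⟮x⁻¹⟯ = k⟮x⟯ := by
  apply le_antisymm <;> rw [adjoin_simple_le_iff]
  · exact inv_mem (mem_adjoin_simple_self k x)
  · simpa only [inv_inv] using inv_mem (mem_adjoin_simple_self k x⁻¹)

theorem exists_twist_eq {K : IntermediateField k E} (hK : (Module.finrank k K).Prime)
    {σ : E ≃ₐ[k] E} {a b x y : E} (ha : a ^ 2 + 3 * a + 9 ≠ 0) (hx : IsShanksRoot a x)
    (hy : IsShanksRoot b y) (hxK : x ∈ K) (hyK : y ∈ K) (hσx : σ x = rot x) (hσy : σ y = rot y)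
    (hxy : x ≠ y) : ∃ t : k, twist (algebraMap k E t) x = y := by
  have fixed : σ (twistParam x y) = twistParam x y :=
    calc σ (twistParam x y) = twistParam (σ x) (σ y) := map_twistParam (σ : E →+* E) x y
      _ = twistParam x y := by
        rw [hσx, hσy, twistParam_rot hx.add_one_ne_zero hy.add_one_ne_zero]
  obtain ⟨t, ht⟩ := IntermediateField.mem_bot.1 <| mem_bot_of_finrank_prime hK hxK
    (hσx.trans_ne (hx.rot_ne_self ha)) (twistParam_mem hxK hyK) fixed
  exact ⟨t, ht ▸ twist_twistParam (hx.sq_add_add_one_ne_zero ha) hxy⟩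

end Extension

section Rational

theorem conductor_pos (m : ℤ) : 0 < m ^ 2 + 3 * m + 9 := by
  nlinarith only [sq_nonneg (2 * m + 3)]

theorem odd_F {m x y : ℤ} (h : IsCoprime x y) : Odd (F m x y) := by
  have not_both_even : ¬ (Even x ∧ Even y) := fun ⟨hx, hy⟩ =>
    Int.prime_two.not_isUnit (h.isUnit_of_dvd' hx.two_dvd hy.two_dvd)
  have not_even_three : ¬ Even (3 : ℤ) := by decide
  by_contra hF
  rw [Int.not_odd_iff_even, F] at hF
  by_cases hx : Even x <;> by_cases hy : Even y <;> by_cases hm : Even m <;>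
    simp_all [Int.even_sub, Int.even_add, Int.even_mul, Int.even_pow]

theorem F_ne_zero {m x y : ℤ} (h : IsCoprime x y) : F m x y ≠ 0 :=
  fun h0 => Int.not_odd_zero (h0 ▸ odd_F h)

theorem shanksForm_div {m x y : ℤ} (hy : y ≠ 0) :
    shanksForm (m : ℚ) (x / y) 1 = F m x y / y ^ 3 := by
  have hy' : (y : ℚ) ≠ 0 := Int.cast_ne_zero.2 hy
  have cast : (F m x y : ℚ) = shanksForm (m : ℚ) x y := map_shanksForm (Int.castRingHom ℚ) m x y
  rw [cast, eq_div_iff (pow_ne_zero 3 hy'), mul_comm, ← shanksForm_mul_mul,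
    mul_div_cancel₀ _ hy', mul_one]

theorem not_isShanksRoot_rat (m : ℤ) (t : ℚ) : ¬ IsShanksRoot (m : ℚ) t := by
  have hden : (t.den : ℤ) ≠ 0 := Int.natCast_ne_zero.2 t.den_ne_zero
  have value := shanksForm_div (m := m) (x := t.num) hden
  rw [Int.cast_natCast, Rat.num_div_den] at value
  rw [IsShanksRoot, value]
  exact div_ne_zero (Int.cast_ne_zero.2 (F_ne_zero t.isCoprime_num_den))
    (pow_ne_zero 3 (Nat.cast_ne_zero.2 t.den_ne_zero))

theorem exists_isCoprime_div_eq_and_F_pos (m : ℤ) (t : ℚ) :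
    ∃ x y : ℤ, y ≠ 0 ∧ IsCoprime x y ∧ (x / y : ℚ) = t ∧ 0 < F m x y := by
  have hden : (t.den : ℤ) ≠ 0 := Int.natCast_ne_zero.2 t.den_ne_zero
  have coprime : IsCoprime t.num (t.den : ℤ) := t.isCoprime_num_den
  rcases (F_ne_zero (m := m) coprime).lt_or_gt with neg | pos
  · refine ⟨-t.num, -t.den, neg_ne_zero.2 hden, coprime.neg_neg, ?_, ?_⟩
    · rw [Int.cast_neg, Int.cast_neg, neg_div_neg_eq, Int.cast_natCast, Rat.num_div_den]
    · have : F m (-t.num) (-t.den) = -F m t.num t.den := by unfold F; ring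
      rwa [this, neg_pos]
  · exact ⟨t.num, t.den, hden, coprime, by rw [Int.cast_natCast, Rat.num_div_den], pos⟩

theorem param_equation_div_iff {m n x y : ℤ} (hy : y ≠ 0) :
    ((n : ℚ) - m) * shanksForm (m : ℚ) (x / y) 1 =
        ((m : ℚ) ^ 2 + 3 * m + 9) * (x / y * (x / y + 1)) ↔
      (n - m) * F m x y = (m ^ 2 + 3 * m + 9) * (x * y * (x + y)) := by
  have hy' : (y : ℚ) ≠ 0 := Int.cast_ne_zero.2 hy
  have lhs : ((n : ℚ) - m) * shanksForm (m : ℚ) (x / y) 1 = (n - m) * F m x y / y ^ 3 := by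
    rw [shanksForm_div hy, mul_div_assoc]
  have rhs : ((m : ℚ) ^ 2 + 3 * m + 9) * (x / y * (x / y + 1)) =
      (m ^ 2 + 3 * m + 9) * (x * y * (x + y)) / y ^ 3 := by
    field_simp
  rw [lhs, rhs, div_left_inj' (pow_ne_zero 3 hy')]
  norm_cast

theorem f_monic (m : ℤ) : (f m).Monic := by
  unfold f; monicity!

theorem f_natDegree (m : ℤ) : (f m).natDegree = 3 := by
  unfold f; compute_degree!

theorem aeval_f_eq_zero_iff {E : Type*} [Field E] [Algebra ℚ E] {m : ℤ} {x : E} :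
    aeval x (f m) = 0 ↔ IsShanksRoot (m : E) x := by
  simp [f, IsShanksRoot, shanksForm]

theorem f_irreducible (m : ℤ) : Irreducible (f m) := by
  rw [(f_monic m).irreducible_iff_roots_eq_zero_of_degree_le_three (by simp [f_natDegree])
    (f_natDegree m).le, Multiset.eq_zero_iff_forall_notMem]
  exact fun t ht => not_isShanksRoot_rat m t <| aeval_f_eq_zero_iff.1 <| by
    rw [coe_aeval_eq_eval]
    exact (mem_roots'.1 ht).2

end Rational

section Pairs

/-- The pairs counted by `𝒩`. -/
def admissiblePairs (m : ℤ) : Set (ℤ × ℤ) :=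
  {p | Int.gcd p.1 p.2 = 1 ∧ p.1 * p.2 * (p.1 + p.2) ≠ 0 ∧
    0 < F m p.1 p.2 ∧ F m p.1 p.2 ∣ m ^ 2 + 3 * m + 9}

/-- The parameter `n` of the field attached to `(x, y)`, namely the solution of
`(n - m) F_m(x, y) = (m² + 3m + 9) x y (x + y)`; the integer division is exact on
`admissiblePairs m`. -/
def pairParam (m : ℤ) (p : ℤ × ℤ) : ℤ :=
  m + (m ^ 2 + 3 * m + 9) / F m p.1 p.2 * (p.1 * p.2 * (p.1 + p.2))

/-- The symmetry of order three of `F_m`: it replaces the ratio `t = x / y` by `rot t`. -/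
def rotPair (p : ℤ × ℤ) : ℤ × ℤ := (p.2, -p.1 - p.2)

variable {m n : ℤ} {p q : ℤ × ℤ}

theorem F_rotPair (m : ℤ) (p : ℤ × ℤ) : F m (rotPair p).1 (rotPair p).2 = F m p.1 p.2 :=
  shanksForm_rotate m p.1 p.2

theorem rotPair_mem (hp : p ∈ admissiblePairs m) : rotPair p ∈ admissiblePairs m := by
  obtain ⟨coprime, nonzero, pos, dvd⟩ := hp
  refine ⟨?_, ?_, by rwa [F_rotPair], by rwa [F_rotPair]⟩
  · rw [← Int.isCoprime_iff_gcd_eq_one] at coprime ⊢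
    exact isCoprime_rotate coprime
  · convert nonzero using 1
    simp only [rotPair]
    ring

theorem pairParam_rotPair (m : ℤ) (p : ℤ × ℤ) : pairParam m (rotPair p) = pairParam m p := by
  rw [pairParam, F_rotPair, pairParam]
  simp only [rotPair]
  ring

theorem rotPair_rotPair_rotPair (p : ℤ × ℤ) : rotPair (rotPair (rotPair p)) = p := by
  ext <;> simp only [rotPair] <;> ring

theorem rotPair_ne_self (hp : p ∈ admissiblePairs m) : rotPair p ≠ p := by
  intro h
  have h1 : p.2 = p.1 := congrArg Prod.fst h
  have h2 : -p.1 - p.2 = p.2 := congrArg Prod.snd h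
  have hp1 : p.1 = 0 := by lia
  exact hp.2.1 (by rw [hp1, zero_mul, zero_mul])

theorem pairParam_eq_iff (hp : p ∈ admissiblePairs m) :
    pairParam m p = n ↔
      (n - m) * F m p.1 p.2 = (m ^ 2 + 3 * m + 9) * (p.1 * p.2 * (p.1 + p.2)) := by
  obtain ⟨-, -, pos, dvd⟩ := hp
  obtain ⟨d, hd⟩ := dvd
  rw [pairParam, hd, Int.mul_ediv_cancel_left _ pos.ne', mul_comm (n - m), mul_assoc (F m _ _),
    mul_right_inj' pos.ne', sub_eq_iff_eq_add', eq_comm]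

theorem pairParam_ne (hp : p ∈ admissiblePairs m) : pairParam m p ≠ m := by
  intro h
  have equation := (pairParam_eq_iff hp).1 h
  rw [sub_self, zero_mul] at equation
  exact mul_ne_zero (conductor_pos m).ne' hp.2.1 equation.symm

theorem eq_of_proportional (hp : p ∈ admissiblePairs m) (hq : q ∈ admissiblePairs m)
    (h : p.1 * q.2 = p.2 * q.1) : p = q := by
  obtain ⟨c, h1, h2⟩ := exists_units_mul_of_isCoprime (Int.isCoprime_iff_gcd_eq_one.2 hp.1)
    (Int.isCoprime_iff_gcd_eq_one.2 hq.1) h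
  have scale : F m q.1 q.2 = c ^ 3 * F m p.1 p.2 := by
    rw [h1, h2]
    exact shanksForm_mul_mul m _ p.1 p.2
  have hFq := hq.2.2.1
  rw [scale, mul_pos_iff_of_pos_right hp.2.2.1] at hFq
  rcases Int.units_eq_one_or c with rfl | rfl
  · ext <;> simp only [h1, h2, Units.val_one, one_mul]
  · exact absurd hFq (by decide)

theorem eq_or_eq_rotPair (hp : p ∈ admissiblePairs m) (hq : q ∈ admissiblePairs m)
    (h : pairParam m q = pairParam m p) :
    q = p ∨ q = rotPair p ∨ q = rotPair (rotPair p) := by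
  have equation_p := (pairParam_eq_iff hp).1 rfl
  have equation_q := (pairParam_eq_iff hq).1 h
  have proportional : q.1 * q.2 * (q.1 + q.2) * shanksForm m p.1 p.2 -
      p.1 * p.2 * (p.1 + p.2) * shanksForm m q.1 q.2 = 0 := by
    apply mul_left_cancel₀ (conductor_pos m).ne'
    rw [← F_eq_shanksForm, ← F_eq_shanksForm]
    linear_combination F m q.1 q.2 * equation_p - F m p.1 p.2 * equation_q
  rw [cross_shanksForm, mul_eq_zero, mul_eq_zero, sub_eq_zero, sub_eq_zero, sub_eq_zero]
    at proportional
  have hp' := rotPair_mem hp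
  have rotate_twice : (rotPair (rotPair p)).2 = p.1 := by simp only [rotPair]; ring
  exact proportional.imp (eq_of_proportional hq hp) <| Or.imp (eq_of_proportional hq hp')
    fun h => eq_of_proportional hq (rotPair_mem hp') (rotate_twice ▸ h)

theorem admissiblePairs_inter_preimage_pairParam (hp : p ∈ admissiblePairs m) :
    admissiblePairs m ∩ pairParam m ⁻¹' {pairParam m p} =
      {p, rotPair p, rotPair (rotPair p)} := by
  have hp' := rotPair_mem hp
  ext q
  refine ⟨fun ⟨hq, h⟩ => eq_or_eq_rotPair hp hq h, ?_⟩
  rintro (rfl | rfl | rfl)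
  · exact ⟨hp, rfl⟩
  · exact ⟨hp', pairParam_rotPair m p⟩
  · exact ⟨rotPair_mem hp', (pairParam_rotPair m _).trans (pairParam_rotPair m p)⟩

theorem ncard_admissiblePairs (m : ℤ) :
    (admissiblePairs m).ncard = 3 * (pairParam m '' admissiblePairs m).ncard := by
  refine ncard_eq_mul_ncard_image three_ne_zero ?_
  rintro _ ⟨p, hp, rfl⟩
  have hp' := rotPair_mem hp
  rw [admissiblePairs_inter_preimage_pairParam hp, Set.ncard_eq_three]
  refine ⟨_, _, _, (rotPair_ne_self hp).symm, ?_, (rotPair_ne_self hp').symm, rfl⟩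
  simpa only [rotPair_rotPair_rotPair] using rotPair_ne_self (rotPair_mem hp')

theorem F_dvd_of_param_equation {x y : ℤ} (hxy : IsCoprime x y)
    (h : (n - m) * F m x y = (m ^ 2 + 3 * m + 9) * (x * y * (x + y))) :
    F m x y ∣ m ^ 2 + 3 * m + 9 :=
  (isCoprime_shanksForm m hxy).dvd_of_dvd_mul_right (Dvd.intro_left _ h)

theorem image_pairParam (m : ℤ) :
    pairParam m '' admissiblePairs m =
      {n : ℤ | n ≠ m ∧ ∃ t : ℚ,
        ((n : ℚ) - m) * shanksForm (m : ℚ) t 1 = ((m : ℚ) ^ 2 + 3 * m + 9) * (t * (t + 1))} := by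
  ext n
  constructor
  · rintro ⟨p, hp, rfl⟩
    have hp2 : p.2 ≠ 0 := right_ne_zero_of_mul (left_ne_zero_of_mul hp.2.1)
    exact ⟨pairParam_ne hp, p.1 / p.2,
      (param_equation_div_iff hp2).2 ((pairParam_eq_iff hp).1 rfl)⟩
  · rintro ⟨hnm, t, ht⟩
    obtain ⟨x, y, hy, hxy, rfl, pos⟩ := exists_isCoprime_div_eq_and_F_pos m t
    rw [param_equation_div_iff hy] at ht
    have nonzero : x * y * (x + y) ≠ 0 := fun h0 => by
      rw [h0, mul_zero] at ht
      exact mul_ne_zero (sub_ne_zero.2 hnm) pos.ne' ht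
    have mem : (x, y) ∈ admissiblePairs m :=
      ⟨Int.isCoprime_iff_gcd_eq_one.1 hxy, nonzero, pos, F_dvd_of_param_equation hxy ht⟩
    exact ⟨(x, y), mem, (pairParam_eq_iff mem).2 ht⟩

end Pairs

section Fields

open IntermediateField

local notation "Ω" => AlgebraicClosure ℚ

-- Instance search equips `Ω` with `DivisionRing.toRatAlgebra`, which is not definitionally the
-- algebra structure coming with the algebraic closure.
instance isAlgClosure_algebraicClosure_rat : IsAlgClosure ℚ Ω where
  isAlgClosed := AlgebraicClosure.isAlgClosed ℚ
  isAlgebraic := by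
    rw [Subsingleton.elim DivisionRing.toRatAlgebra (AlgebraicClosure.instAlgebra ℚ)]
    exact AlgebraicClosure.isAlgebraic ℚ

variable {m n : ℤ} {x y : Ω} {σ : Ω ≃ₐ[ℚ] Ω}

theorem conductor_ne_zero (m : ℤ) : (m : Ω) ^ 2 + 3 * m + 9 ≠ 0 := by
  exact_mod_cast (conductor_pos m).ne'

theorem exists_isShanksRoot (m : ℤ) : ∃ x : Ω, IsShanksRoot (m : Ω) x := by
  have degree_ne_zero : (f m).degree ≠ 0 :=
    degree_ne_of_natDegree_ne (by rw [f_natDegree]; exact three_ne_zero)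
  obtain ⟨x, hx⟩ := IsAlgClosed.exists_aeval_eq_zero Ω (f m) degree_ne_zero
  exact ⟨x, aeval_f_eq_zero_iff.1 hx⟩

namespace IsShanksRoot

theorem neg_sub_three (hx : IsShanksRoot (n : Ω) x) :
    IsShanksRoot ((-n - 3 : ℤ) : Ω) x⁻¹ := by
  simpa only [Int.cast_sub, Int.cast_neg, Int.cast_ofNat] using hx.inv

theorem map_algEquiv (σ : Ω ≃ₐ[ℚ] Ω) (hx : IsShanksRoot (n : Ω) x) :
    IsShanksRoot (n : Ω) (σ x) :=
  map_intCast (σ : Ω →+* Ω) n ▸ (map_iff (σ : Ω →+* Ω)).2 hx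

theorem minpoly_eq (hx : IsShanksRoot (m : Ω) x) : minpoly ℚ x = f m :=
  (minpoly.eq_of_irreducible_of_monic (f_irreducible m) (aeval_f_eq_zero_iff.2 hx)
    (f_monic m)).symm

theorem notMem_bot (hx : IsShanksRoot (m : Ω) x) : x ∉ (⊥ : IntermediateField ℚ Ω) := by
  intro h
  obtain ⟨t, rfl⟩ := IntermediateField.mem_bot.1 h
  rw [← map_intCast (algebraMap ℚ Ω), map_iff] at hx
  exact not_isShanksRoot_rat m t hx

theorem L_eq_adjoin (hx : IsShanksRoot (m : Ω) x) : L m = ℚ⟮x⟯ := by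
  have mem_rootSet {y : Ω} : y ∈ (f m).rootSet Ω ↔ IsShanksRoot (m : Ω) y := by
    rw [mem_rootSet_of_ne (f_monic m).ne_zero, aeval_f_eq_zero_iff]
  apply le_antisymm
  · refine adjoin_le_iff.2 fun y hy => ?_
    have hxx := mem_adjoin_simple_self ℚ x
    rcases hx.eq_or_eq_rot (mem_rootSet.1 hy) with rfl | rfl | rfl
    · exact hxx
    · exact rot_mem hxx
    · exact rot_mem (rot_mem hxx)
  · exact adjoin_simple_le_iff.2 (subset_adjoin _ _ (mem_rootSet.2 hx))

theorem mem_L (hx : IsShanksRoot (m : Ω) x) : x ∈ L m :=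
  hx.L_eq_adjoin ▸ mem_adjoin_simple_self ℚ x

end IsShanksRoot

theorem finrank_L (m : ℤ) : Module.finrank ℚ (L m) = 3 := by
  obtain ⟨x, hx⟩ := exists_isShanksRoot m
  rw [hx.L_eq_adjoin, adjoin.finrank (Algebra.IsIntegral.isIntegral x), hx.minpoly_eq, f_natDegree]

theorem finrank_L_prime (m : ℤ) : (Module.finrank ℚ (L m)).Prime :=
  finrank_L m ▸ Nat.prime_three

theorem L_neg_sub_three (n : ℤ) : L (-n - 3) = L n := by
  obtain ⟨x, hx⟩ := exists_isShanksRoot n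
  rw [hx.L_eq_adjoin, hx.neg_sub_three.L_eq_adjoin, adjoin_inv]

/-- `σ` permutes the roots of `f_n` in the cyclic order given by `rot`, and not in the opposite
one. -/
def RotatesRoots (σ : Ω ≃ₐ[ℚ] Ω) (n : ℤ) : Prop :=
  ∀ x : Ω, IsShanksRoot (n : Ω) x → σ x = rot x

theorem map_rot_algEquiv (σ : Ω ≃ₐ[ℚ] Ω) (x : Ω) : σ (rot x) = rot (σ x) :=
  map_rot (σ : Ω →+* Ω) x

theorem rotatesRoots_of_eq (hx : IsShanksRoot (n : Ω) x) (h : σ x = rot x) :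
    RotatesRoots σ n := by
  intro y hy
  rcases hx.eq_or_eq_rot hy with rfl | rfl | rfl
  · exact h
  · rw [map_rot_algEquiv, h]
  · rw [map_rot_algEquiv, map_rot_algEquiv, h]

theorem exists_rotatesRoots (m : ℤ) : ∃ σ : Ω ≃ₐ[ℚ] Ω, RotatesRoots σ m := by
  obtain ⟨x, hx⟩ := exists_isShanksRoot m
  have conj : IsConjRoot ℚ (rot x) x := hx.rot.minpoly_eq.trans hx.minpoly_eq.symm
  obtain ⟨σ, hσ⟩ := conj.exists_algEquiv
  exact ⟨σ, rotatesRoots_of_eq hx hσ⟩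

theorem RotatesRoots.not_neg_sub_three (h : RotatesRoots σ n) : ¬ RotatesRoots σ (-n - 3) := by
  intro h'
  obtain ⟨x, hx⟩ := exists_isShanksRoot n
  have := h' _ hx.neg_sub_three
  rw [map_inv₀, h x hx, rot_inv hx.ne_zero hx.add_one_ne_zero, inv_inj] at this
  exact hx.rot.rot_ne_self (conductor_ne_zero n) this.symm

theorem RotatesRoots.or_neg_sub_three (hσ : RotatesRoots σ m) (hL : L n = L m) :
    RotatesRoots σ n ∨ RotatesRoots σ (-n - 3) := by
  obtain ⟨x, hx⟩ := exists_isShanksRoot m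
  obtain ⟨y, hy⟩ := exists_isShanksRoot n
  have moved : σ x ≠ x := (hσ x hx).trans_ne (hx.rot_ne_self (conductor_ne_zero m))
  rcases hy.eq_or_eq_rot (hy.map_algEquiv σ) with h | h | h
  · exact absurd (mem_bot_of_finrank_prime (finrank_L_prime m) hx.mem_L moved (hL ▸ hy.mem_L) h)
      hy.notMem_bot
  · exact .inl (rotatesRoots_of_eq hy h)
  · refine .inr (rotatesRoots_of_eq hy.neg_sub_three ?_)
    rw [map_inv₀, h, rot_inv hy.ne_zero hy.add_one_ne_zero]

theorem RotatesRoots.exists_param_equation (hσ : RotatesRoots σ m) (hnm : n ≠ m)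
    (hL : L n = L m) (hσn : RotatesRoots σ n) :
    ∃ t : ℚ, ((n : ℚ) - m) * shanksForm (m : ℚ) t 1 =
      ((m : ℚ) ^ 2 + 3 * m + 9) * (t * (t + 1)) := by
  obtain ⟨x, hx⟩ := exists_isShanksRoot m
  obtain ⟨y, hy⟩ := exists_isShanksRoot n
  have hxy : x ≠ y := by
    rintro rfl
    exact hnm (Int.cast_injective (hy.param_unique hx))
  obtain ⟨t, rfl⟩ := exists_twist_eq (finrank_L_prime m) (conductor_ne_zero m) hx hy hx.mem_L
    (hL ▸ hy.mem_L) (hσ x hx) (hσn y hy) hxy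
  rw [← map_intCast (algebraMap ℚ Ω)] at hx hy
  exact ⟨t, (hx.twist_map_iff (algebraMap ℚ Ω) (not_isShanksRoot_rat m t)).1 hy⟩

theorem RotatesRoots.of_param_equation (hσ : RotatesRoots σ m) {t : ℚ}
    (ht : ((n : ℚ) - m) * shanksForm (m : ℚ) t 1 = ((m : ℚ) ^ 2 + 3 * m + 9) * (t * (t + 1))) :
    L n = L m ∧ RotatesRoots σ n := by
  obtain ⟨x, hx⟩ := exists_isShanksRoot m
  have not_root := not_isShanksRoot_rat m t
  have htx : algebraMap ℚ Ω t ≠ x := by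
    rintro rfl
    exact hx.notMem_bot (IntermediateField.algebraMap_mem _ t)
  have hy : IsShanksRoot (n : Ω) (twist (algebraMap ℚ Ω t) x) := by
    rw [← map_intCast (algebraMap ℚ Ω)] at hx ⊢
    exact (hx.twist_map_iff (algebraMap ℚ Ω) not_root).2 ht
  have disc_ne_zero : t ^ 2 + t + 1 ≠ 0 := by nlinarith only [sq_nonneg (2 * t + 1)]
  refine ⟨by rw [hy.L_eq_adjoin, hx.L_eq_adjoin, adjoin_twist htx disc_ne_zero],
    rotatesRoots_of_eq hy ?_⟩
  calc σ (twist (algebraMap ℚ Ω t) x) = twist (σ (algebraMap ℚ Ω t)) (σ x) :=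
        map_twist (σ : Ω →+* Ω) _ x
    _ = twist (algebraMap ℚ Ω t) (rot x) := by rw [σ.commutes, hσ x hx]
    _ = rot (twist (algebraMap ℚ Ω t) x) := twist_rot hx.add_one_ne_zero htx

/-- The parameters `n ≠ m` of the field `L m` for which `σ` rotates the roots of `f_n` in the
direction of `rot`. -/
def orientedParams (σ : Ω ≃ₐ[ℚ] Ω) (m : ℤ) : Set ℤ :=
  {n | n ≠ m ∧ L n = L m ∧ RotatesRoots σ n}

theorem RotatesRoots.image_pairParam (hσ : RotatesRoots σ m) :
    pairParam m '' admissiblePairs m = orientedParams σ m := by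
  rw [_root_.image_pairParam]
  ext n
  exact and_congr_right fun hnm =>
    ⟨fun ⟨_, ht⟩ => hσ.of_param_equation ht, fun h => hσ.exists_param_equation hnm h.1 h.2⟩

theorem injOn_max_neg_sub_three (σ : Ω ≃ₐ[ℚ] Ω) (m : ℤ) :
    Set.InjOn (fun n : ℤ => max n (-n - 3)) (orientedParams σ m) := by
  intro a ha b hb hab
  have opposite : a ≠ -b - 3 := by
    rintro rfl
    exact hb.2.2.not_neg_sub_three ha.2.2
  have : max a (-a - 3) = max b (-b - 3) := hab
  lia

theorem RotatesRoots.image_max_neg_sub_three (hσ : RotatesRoots σ m) :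
    (fun n : ℤ => max n (-n - 3)) '' orientedParams σ m =
      {n : ℤ | -1 ≤ n ∧ n ≠ m ∧ n ≠ -m - 3 ∧ L n = L m} := by
  ext n
  constructor
  · rintro ⟨a, ⟨ham, hL, ha⟩, rfl⟩
    have opposite : a ≠ -m - 3 := by
      rintro rfl
      exact hσ.not_neg_sub_three ha
    have hL' : L (max a (-a - 3)) = L m := by
      rcases max_choice a (-a - 3) with h | h <;> rw [h]
      exacts [hL, (L_neg_sub_three a).trans hL]
    refine ⟨?_, ?_, ?_, hL'⟩ <;> dsimp only <;> lia
  · rintro ⟨hn, hnm, hnm', hL⟩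
    rcases hσ.or_neg_sub_three hL with h | h
    · exact ⟨n, ⟨hnm, hL, h⟩, by dsimp only; lia⟩
    · exact ⟨-n - 3, ⟨by lia, (L_neg_sub_three n).trans hL, h⟩, by dsimp only; lia⟩

end Fields

theorem stmt1 (m : ℤ) :
    {p : ℤ × ℤ | Int.gcd p.1 p.2 = 1 ∧ p.1 * p.2 * (p.1 + p.2) ≠ 0 ∧
        0 < F m p.1 p.2 ∧ F m p.1 p.2 ∣ m ^ 2 + 3 * m + 9}.ncard =
      3 * {n : ℤ | -1 ≤ n ∧ n ≠ m ∧ n ≠ -m - 3 ∧ L n = L m}.ncard := by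
  obtain ⟨σ, hσ⟩ := exists_rotatesRoots m
  calc (admissiblePairs m).ncard
    _ = 3 * (pairParam m '' admissiblePairs m).ncard := ncard_admissiblePairs m
    _ = 3 * (orientedParams σ m).ncard := by rw [hσ.image_pairParam]
    _ = 3 * ((fun n : ℤ => max n (-n - 3)) '' orientedParams σ m).ncard := by
      rw [(injOn_max_neg_sub_three σ m).ncard_image]
    _ = 3 * {n : ℤ | -1 ≤ n ∧ n ≠ m ∧ n ≠ -m - 3 ∧ L n = L m}.ncard := by
      rw [hσ.image_max_neg_sub_three]
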